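/- arXiv:1802.05249 — 10 statements merged into one kernel-verified Lean document; each statement's English description precedes it below -/
import Mathlib

section
/- Let n ≥ 1 be an integer, ρ ≥ 0, B > 0, and let z ∈ ℝⁿ satisfy 0 ≤ z_i ≤ B for all i. Let z̄_n and s_n² be the mean and sample variance of z, and let OPT = inf_{p ∈ P_{ρ,n}} ∑_{i=1}^n p_i z_i. Then max(0, √(2ρ s_n² / n) − 2Bρ/n) ≤ z̄_n − OPT ≤ √(2ρ s_n² / n). -/
/-- The χ² uncertainty set `P_{ρ,n}`. -/
def chiSqBall (n : ℕ) (ρ : ℝ) : Set (Fin n → ℝ) :=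
  {p | (∀ i, 0 ≤ p i) ∧ (∑ i, p i = 1) ∧ (1/2) * ∑ i, ((n : ℝ) * p i - 1)^2 ≤ ρ}

/-- Mean of a vector. -/
noncomputable def vecMean {n : ℕ} (z : Fin n → ℝ) : ℝ := (∑ i, z i) / n

/-- Biased sample variance of a vector. -/
noncomputable def vecVar {n : ℕ} (z : Fin n → ℝ) : ℝ := (∑ i, (z i - vecMean z)^2) / n

/-- `OPT = inf_{p ∈ P_{ρ,n}} ∑ p_i z_i`. -/
noncomputable def droOPT (n : ℕ) (ρ : ℝ) (z : Fin n → ℝ) : ℝ :=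
  sInf ((fun p => ∑ i, p i * z i) '' chiSqBall n ρ)

theorem stmt0 (n : ℕ) (hn : 1 ≤ n) (ρ B : ℝ) (hρ : 0 ≤ ρ) (hB : 0 < B)
    (z : Fin n → ℝ) (hz : ∀ i, 0 ≤ z i ∧ z i ≤ B) :
    max 0 (Real.sqrt (2 * ρ * vecVar z / n) - 2 * B * ρ / n) ≤ vecMean z - droOPT n ρ z ∧
      vecMean z - droOPT n ρ z ≤ Real.sqrt (2 * ρ * vecVar z / n) := by
  have hn0 : (0:ℝ) < n := by exact_mod_cast hn
  have hvar : vecVar z = (∑ i, (z i - vecMean z)^2) / n := rfl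
  have hsum : ∑ i, z i = n * vecMean z := by
    unfold vecMean; field_simp
  have hm0 : 0 ≤ vecMean z :=
    div_nonneg (Finset.sum_nonneg fun i _ => (hz i).1) hn0.le
  rw [hvar]
  generalize vecMean z = m at *
  have hd0 : ∑ i, (z i - m) = 0 := by
    rw [Finset.sum_sub_distrib, hsum]; simp
  have hV0 : 0 ≤ ∑ i, (z i - m)^2 := Finset.sum_nonneg fun i _ => sq_nonneg _
  obtain ⟨V, hV⟩ : ∃ V, V = ∑ i, (z i - m)^2 := ⟨_, rfl⟩
  rw [← hV] at hV0 ⊢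
  have hVz : ∑ i, (z i - m) * z i = V := by
    have : ∀ i, (z i - m) * z i = (z i - m)^2 + m * (z i - m) := fun i => by ring
    simp only [this]
    rw [Finset.sum_add_distrib, ← Finset.mul_sum, hd0, hV]; ring
  have hbdd : BddBelow ((fun p => ∑ i, p i * z i) '' chiSqBall n ρ) := by
    refine ⟨0, ?_⟩
    rintro _ ⟨p, hp, rfl⟩
    exact Finset.sum_nonneg fun i _ => mul_nonneg (hp.1 i) (hz i).1
  -- the one-parameter family of feasible points
  have key : ∀ t : ℝ, 0 ≤ t → t * B ≤ 1 → t^2 * V ≤ 2 * ρ →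
      t * V / n ≤ m - droOPT n ρ z ∧ (fun i => (1 - t * (z i - m)) / n) ∈ chiSqBall n ρ := by
    intro t ht htB htV
    have hmem : (fun i => (1 - t * (z i - m)) / n) ∈ chiSqBall n ρ := by
      refine ⟨fun i => ?_, ?_, ?_⟩
      · apply div_nonneg _ hn0.le
        have := mul_le_mul_of_nonneg_left (show z i - m ≤ B by linarith [(hz i).2]) ht
        linarith
      · rw [← Finset.sum_div, Finset.sum_sub_distrib, ← Finset.mul_sum, hd0]
        simp [hn0.ne']
      · have : ∀ i, ((n:ℝ) * ((1 - t * (z i - m)) / n) - 1)^2 = t^2 * (z i - m)^2 := by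
          intro i; field_simp; ring
        simp only [this]
        rw [← Finset.mul_sum, ← hV]; linarith
    refine ⟨?_, hmem⟩
    have h1 : droOPT n ρ z ≤ ∑ i, ((1 - t * (z i - m)) / n) * z i :=
      csInf_le hbdd ⟨_, hmem, rfl⟩
    have h2 : ∑ i, ((1 - t * (z i - m)) / n) * z i = m - t * V / n := by
      have : ∀ i, ((1 - t * (z i - m)) / n) * z i = z i / n - t / n * ((z i - m) * z i) := by
        intro i; ring
      simp only [this]
      rw [Finset.sum_sub_distrib, ← Finset.mul_sum, hVz, ← Finset.sum_div, hsum]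
      field_simp
    linarith
  obtain ⟨h0, hmem0⟩ := key 0 le_rfl (by simp) (by simpa using hρ)
  refine ⟨max_le (by simpa using h0) ?_, ?_⟩
  · by_cases hc : 2 * ρ * B^2 < V
    · have hVp : 0 < V := lt_of_le_of_lt (by positivity) hc
      have hr : 0 ≤ 2 * ρ / V := by positivity
      have hs := Real.sq_sqrt hr
      obtain ⟨h, -⟩ := key (Real.sqrt (2 * ρ / V)) (Real.sqrt_nonneg _) (by
        refine le_trans (le_abs_self _) (abs_le_of_sq_le_sq ?_ zero_le_one)
        rw [mul_pow, hs, div_mul_eq_mul_div, one_pow, div_le_one hVp]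
        exact hc.le) (by rw [hs]; field_simp; rfl)
      have : Real.sqrt (2 * ρ * (V / n) / n) = Real.sqrt (2 * ρ / V) * V / n := by
        rw [Real.sqrt_eq_iff_mul_self_eq (by positivity) (by positivity)]
        have : Real.sqrt (2 * ρ / V) * V / n * (Real.sqrt (2 * ρ / V) * V / n)
          = (Real.sqrt (2 * ρ / V))^2 * V^2 / n^2 := by ring
        rw [this, hs]; field_simp
      have : 0 ≤ 2 * B * ρ / n := by positivity
      linarith
    · have : Real.sqrt (2 * ρ * (V / n) / n) ≤ 2 * B * ρ / n := by
        apply Real.sqrt_le_iff.2 ⟨by positivity, ?_⟩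
        have e1 : 2 * ρ * (V / n) / n = (2 * ρ * V) / n^2 := by field_simp
        have e2 : (2 * B * ρ / n)^2 = (2 * ρ * (2 * ρ * B^2)) / n^2 := by ring
        rw [e1, e2]
        have := not_lt.1 hc
        gcongr
      have : 0 ≤ m - droOPT n ρ z := by simpa using h0
      linarith
  · have : m - Real.sqrt (2 * ρ * (V / n) / n) ≤ droOPT n ρ z := by
      refine le_csInf (Set.Nonempty.image _ ⟨_, hmem0⟩) ?_
      rintro _ ⟨p, hp, rfl⟩
      obtain ⟨-, hp1, hp2⟩ := hp
      have hcs := Finset.sum_mul_sq_le_sq_mul_sq Finset.univ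
        (fun i => (n:ℝ) * p i - 1) (fun i => z i - m)
      have he : ∑ i, ((n:ℝ) * p i - 1) * (z i - m) = n * (∑ i, p i * z i - m) := by
        have : ∀ i, ((n:ℝ) * p i - 1) * (z i - m) = n * (p i * z i) - n * m * p i - (z i - m) := by
          intro i; ring
        simp only [this]
        rw [Finset.sum_sub_distrib, Finset.sum_sub_distrib, ← Finset.mul_sum, ← Finset.mul_sum,
          hd0, hp1]; ring
      simp only [he, ← hV] at hcs
      have : m - ∑ i, p i * z i ≤ Real.sqrt (2 * ρ * (V / n) / n) := by
        apply Real.le_sqrt_of_sq_le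
        have e1 : 2 * ρ * (V / n) / n = (2 * ρ * V) / n^2 := by field_simp
        rw [e1, le_div_iff₀ (by positivity)]
        have := mul_le_mul_of_nonneg_right (show ∑ i, ((n:ℝ) * p i - 1)^2 ≤ 2 * ρ by linarith) hV0
        linarith
      simp only
      linarith
    linarith
end

section
/- Let n ≥ 1 be an integer, ρ ≥ 0, and let z ∈ ℝⁿ with mean z̄_n and sample variance s_n². If s_n² ≥ (2ρ/n)·(max_i z_i − z̄_n)², then inf_{p ∈ P_{ρ,n}} ∑_{i=1}^n p_i z_i = z̄_n − √(2ρ s_n² / n); that is, distributionally robust optimization over the χ² ball is exactly equivalent to variance regularization. -/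
theorem stmt1 (n : ℕ) (hn : 1 ≤ n) (ρ : ℝ) (hρ : 0 ≤ ρ) (z : Fin n → ℝ)
    (hvar : (2 * ρ / n) * ((Finset.univ.sup' ⟨⟨0, hn⟩, Finset.mem_univ _⟩ z) - vecMean z)^2
      ≤ vecVar z) :
    droOPT n ρ z = vecMean z - Real.sqrt (2 * ρ * vecVar z / n) := by
  have hn0 : (0 : ℝ) < n := by exact_mod_cast hn
  have hM : ∀ i, z i ≤ Finset.univ.sup' ⟨⟨0, hn⟩, Finset.mem_univ _⟩ z :=
    fun i => Finset.le_sup' z (Finset.mem_univ i)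
  generalize Finset.univ.sup' ⟨⟨0, hn⟩, Finset.mem_univ _⟩ z = M at hvar hM
  have hS : ∑ i, (z i - vecMean z)^2 = n * vecVar z := by
    unfold vecVar; field_simp
  have hsum : ∑ i, (z i - vecMean z) = 0 := by
    rw [Finset.sum_sub_distrib]
    simp only [Finset.sum_const, Finset.card_univ, Fintype.card_fin, nsmul_eq_mul]
    unfold vecMean; field_simp; ring
  have hv0 : 0 ≤ vecVar z := by
    unfold vecVar; positivity
  generalize vecVar z = v at *
  generalize vecMean z = m at *
  -- rewriting of the objective
  have hobj : ∀ p : Fin n → ℝ, ∑ i, p i = 1 →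
      ∑ i, p i * z i = m + (∑ i, ((n : ℝ) * p i - 1) * (z i - m)) / n := by
    intro p hp
    have h1 : ∑ i, ((n : ℝ) * p i - 1) * (z i - m)
        = n * ∑ i, p i * z i - n * m * ∑ i, p i - ∑ i, (z i - m) := by
      rw [Finset.mul_sum, Finset.mul_sum, ← Finset.sum_sub_distrib, ← Finset.sum_sub_distrib]
      exact Finset.sum_congr rfl fun i _ => by ring
    rw [h1, hp, hsum]; field_simp; ring
  obtain ⟨c, hc0, hc1, hc2, hc3⟩ : ∃ c : ℝ, 0 ≤ c ∧ c^2 * (n * v) ≤ 2 * ρ ∧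
      c * v = Real.sqrt (2 * ρ * v / n) ∧ (∀ i, c * (z i - m) ≤ 1) := by
    rcases hv0.eq_or_lt with h | h
    · subst h
      exact ⟨0, le_rfl, by simpa using hρ, by simp, by simp⟩
    · have hsq : Real.sqrt (2 * ρ / (n * v)) ^ 2 = 2 * ρ / (n * v) :=
        Real.sq_sqrt (by positivity)
      have hs0 := Real.sqrt_nonneg (2 * ρ / (n * v))
      refine ⟨Real.sqrt (2 * ρ / (n * v)), hs0, ?_, ?_, ?_⟩
      · rw [hsq]; apply le_of_eq; field_simp
      · symm
        rw [Real.sqrt_eq_iff_mul_self_eq (by positivity) (by positivity)]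
        have : Real.sqrt (2 * ρ / (n * v)) * v * (Real.sqrt (2 * ρ / (n * v)) * v)
          = Real.sqrt (2 * ρ / (n * v)) ^ 2 * v ^ 2 := by ring
        rw [this, hsq]; field_simp
      · intro i
        rcases le_total (z i) m with hi | hi
        · nlinarith
        · refine le_of_pow_le_pow_left₀ two_ne_zero zero_le_one ?_
          rw [mul_pow, hsq]
          have h2 : (z i - m)^2 ≤ (M - m)^2 := by
            have := hM i
            apply pow_le_pow_left₀ <;> linarith
          calc 2 * ρ / (n * v) * (z i - m)^2 ≤ 2 * ρ / (n * v) * (M - m)^2 := by gcongr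
            _ = (2 * ρ / n * (M - m)^2) / v := by field_simp
            _ ≤ 1 ^ 2 := by rw [one_pow, div_le_one h]; exact hvar
  apply IsLeast.csInf_eq
  constructor
  · have hp1 : ∑ i, (1 - c * (z i - m)) / n = 1 := by
      rw [← Finset.sum_div, Finset.sum_sub_distrib, ← Finset.mul_sum, hsum]
      simp [hn0.ne']
    have hq : ∀ i, (n : ℝ) * ((1 - c * (z i - m)) / n) - 1 = - c * (z i - m) := by
      intro i; field_simp; ring
    refine ⟨fun i => (1 - c * (z i - m)) / n, ⟨?_, hp1, ?_⟩, ?_⟩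
    · intro i
      have := hc3 i
      exact div_nonneg (by linarith) hn0.le
    · simp only [hq, mul_pow]
      rw [← Finset.mul_sum, hS]
      linarith [neg_sq c ▸ hc1]
    · show ∑ i, (1 - c * (z i - m)) / n * z i = _
      rw [hobj _ hp1]
      simp only [hq]
      have : ∀ i, - c * (z i - m) * (z i - m) = - c * (z i - m)^2 := fun i => by ring
      simp only [this]
      rw [← Finset.mul_sum, hS, ← hc2]
      field_simp; ring
  · rintro _ ⟨p, ⟨_, hp1, hp2⟩, rfl⟩
    show _ ≤ ∑ i, p i * z i
    rw [hobj p hp1]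
    have hcs := Finset.sum_mul_sq_le_sq_mul_sq Finset.univ
      (fun i => (n : ℝ) * p i - 1) (fun i => z i - m)
    simp only [hS] at hcs
    set T := ∑ i, ((n : ℝ) * p i - 1) * (z i - m)
    have h3 : T ^ 2 ≤ 2 * ρ * (n * v) :=
      hcs.trans (mul_le_mul_of_nonneg_right (by linarith) (by positivity))
    have h4 : |T / n| ≤ Real.sqrt (2 * ρ * v / n) := by
      apply Real.abs_le_sqrt
      rw [div_pow, div_le_div_iff₀ (by positivity) hn0]
      nlinarith
    linarith [(abs_le.mp h4).1]
end

section
/- Let n ≥ 1 be an integer, ρ ≥ 0, and let z ∈ ℝⁿ with mean z̄_n and sample variance s_n² satisfying s_n² > 0 and s_n² ≥ (2ρ/n)·(max_i z_i − z̄_n)². Define p* ∈ ℝⁿ by p*_i = (1/n)·(1 − √(2ρ/(n s_n²))·(z_i − z̄_n)). Then p* ∈ P_{ρ,n}, p* is the unique minimizer of p ↦ ∑_{i=1}^n p_i z_i over P_{ρ,n}, and ∑_{i=1}^n p*_i z_i = z̄_n − √(2ρ s_n²/n). -/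
theorem stmt2 (n : ℕ) (hn : 1 ≤ n) (ρ : ℝ) (hρ : 0 ≤ ρ) (z : Fin n → ℝ)
    (hs : 0 < vecVar z)
    (hvar : (2 * ρ / n) * ((Finset.univ.sup' ⟨⟨0, hn⟩, Finset.mem_univ _⟩ z) - vecMean z)^2
      ≤ vecVar z)
    (p : Fin n → ℝ)
    (hp : ∀ i, p i = (1/(n:ℝ)) * (1 - Real.sqrt (2 * ρ / (n * vecVar z)) * (z i - vecMean z))) :
    p ∈ chiSqBall n ρ ∧
      (∀ q ∈ chiSqBall n ρ, ∑ i, p i * z i ≤ ∑ i, q i * z i) ∧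
      (∀ q ∈ chiSqBall n ρ, (∑ i, q i * z i = ∑ i, p i * z i) → q = p) ∧
      ∑ i, p i * z i = vecMean z - Real.sqrt (2 * ρ * vecVar z / n) := by
  have hn0 : (0:ℝ) < n := by exact_mod_cast hn
  have hnn : (n:ℝ) ≠ 0 := hn0.ne'
  set m := vecMean z with hm
  set s := vecVar z with hsd
  set t := Real.sqrt (2 * ρ / (n * s)) with ht
  have ht0 : 0 ≤ t := Real.sqrt_nonneg _
  have ht2 : t ^ 2 = 2 * ρ / (n * s) := Real.sq_sqrt (by positivity)
  have ht2' : t ^ 2 * (n * s) = 2 * ρ := by rw [ht2]; field_simp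
  have hzsum : ∑ i, z i = n * m := by rw [hm, vecMean]; field_simp
  have hd0 : ∑ i, (z i - m) = 0 := by
    rw [Finset.sum_sub_distrib, hzsum]; simp
  have hD : ∑ i, (z i - m) ^ 2 = n * s := by
    rw [hsd, vecVar]; field_simp; rfl
  have hnp : ∀ i, (n:ℝ) * p i - 1 = -t * (z i - m) := by
    intro i; rw [hp i]; field_simp; ring
  have hpsum : ∑ i, p i = 1 := by
    have h : ∑ i, ((n:ℝ) * p i - 1) = 0 := by
      simp_rw [hnp]; rw [← Finset.mul_sum, hd0, mul_zero]
    rw [Finset.sum_sub_distrib, ← Finset.mul_sum] at h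
    simp at h
    have : (n:ℝ) * (∑ i, p i) = n * 1 := by linarith
    exact mul_left_cancel₀ hnn this
  have hpsq : ∑ i, ((n:ℝ) * p i - 1) ^ 2 = 2 * ρ := by
    simp_rw [hnp, mul_pow]; rw [← Finset.mul_sum, hD, neg_sq, ht2']
  have hpz : ∑ i, p i * z i = m - t * s := by
    have h : ∀ i, (n:ℝ) * (p i * z i) = z i - t * (z i - m) ^ 2 - t * m * (z i - m) := by
      intro i; have := hnp i
      linear_combination z i * this
    have h2 : (n:ℝ) * ∑ i, p i * z i = n * (m - t * s) := by
      rw [Finset.mul_sum]; simp_rw [h]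
      rw [Finset.sum_sub_distrib, Finset.sum_sub_distrib, ← Finset.mul_sum, ← Finset.mul_sum,
        hd0, hD, hzsum]
      ring
    exact mul_left_cancel₀ hnn h2
  have key : ∀ q ∈ chiSqBall n ρ, ∑ i, ((n:ℝ) * q i - n * p i) ^ 2
      ≤ 2 * t * n * (∑ i, q i * z i - ∑ i, p i * z i) := by
    rintro q ⟨-, hq1, hq2⟩
    have e : ∀ i, ((n:ℝ) * q i - n * p i) ^ 2 = ((n:ℝ) * q i - 1) ^ 2
        - ((n:ℝ) * p i - 1) ^ 2 + 2 * t * n * (q i * z i - p i * z i)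
        - 2 * t * n * m * (q i - p i) := by
      intro i; have := hnp i
      linear_combination (-2 * ((n:ℝ) * q i - n * p i)) * this
    simp_rw [e]
    rw [Finset.sum_sub_distrib, Finset.sum_add_distrib, Finset.sum_sub_distrib, ← Finset.mul_sum,
      ← Finset.mul_sum, Finset.sum_sub_distrib, Finset.sum_sub_distrib, hq1, hpsum, hpsq]
    linarith
  have uniq : ∀ q : Fin n → ℝ, ∑ i, ((n:ℝ) * q i - n * p i) ^ 2 ≤ 0 → q = p := by
    intro q h
    have h0 := le_antisymm h (Finset.sum_nonneg fun i _ => sq_nonneg _)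
    rw [Finset.sum_eq_zero_iff_of_nonneg (fun i _ => sq_nonneg _)] at h0
    funext i
    have h1 := pow_eq_zero_iff (two_ne_zero) |>.1 (h0 i (Finset.mem_univ i))
    exact mul_left_cancel₀ hnn (sub_eq_zero.1 h1)
  refine ⟨⟨?_, hpsum, by rw [hpsq]; linarith⟩, ?_, ?_, ?_⟩
  · intro i
    rw [hp i]
    have hle := Finset.le_sup' z (Finset.mem_univ i)
    set M := Finset.univ.sup' ⟨⟨0, hn⟩, Finset.mem_univ _⟩ z
    have h1 : (t * (M - m)) ^ 2 ≤ 1 ^ 2 := by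
      have e : (t * (M - m)) ^ 2 = ((2 * ρ / n) * (M - m) ^ 2) / s := by
        rw [mul_pow, ht2]; field_simp
      rw [e, one_pow, div_le_one hs]; exact hvar
    have h2 : t * (M - m) ≤ 1 := le_of_sq_le_sq h1 zero_le_one
    have h3 : t * (z i - m) ≤ t * (M - m) := by gcongr
    have : 0 ≤ 1 - t * (z i - m) := by linarith
    positivity
  · intro q hq
    have hk := key q hq
    rcases ht0.eq_or_lt with h | h
    · rw [← h] at hk
      rw [uniq q (by simpa using hk)]
    · have h0 : 0 ≤ 2 * t * n * (∑ i, q i * z i - ∑ i, p i * z i) :=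
        le_trans (Finset.sum_nonneg fun i _ => sq_nonneg _) hk
      have := nonneg_of_mul_nonneg_right h0 (by positivity)
      linarith
  · intro q hq he
    have hk := key q hq
    rw [he, sub_self, mul_zero] at hk
    exact uniq q hk
  · rw [hpz]
    congr 1
    symm
    rw [Real.sqrt_eq_iff_mul_self_eq (by positivity) (by positivity)]
    have : t * s * (t * s) = t ^ 2 * s ^ 2 := by ring
    rw [this, ht2]; field_simp
end

section
/- Let n ≥ 2 be an integer and 0 < ρ < n(n−1)/2, and let z ∈ ℝⁿ have distinct sorted entries z_1 < z_2 < ⋯ < z_n. For m ∈ {1,…,n} define α(m,n,ρ) = 2ρm/n² + m/n − 1, and let I = {m ∈ {1,…,n} : α(m,n,ρ) > 0}. Then n ∈ I, every m ∈ I satisfies m ≥ 2, and inf_{p ∈ P_{ρ,n}} ∑_{i=1}^n p_i z_i = min_{m ∈ I} [ z̄_m − min( √(α(m,n,ρ)·s_m²), s_m²/(z_m − z̄_m) ) ], where z̄_m and s_m² are the mean and sample variance of the first m entries z_1,…,z_m. -/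
/-- Mean of the first `m` entries. -/
noncomputable def meanM {n : ℕ} (z : Fin n → ℝ) (m : ℕ) : ℝ :=
  (∑ i ∈ Finset.univ.filter (fun i : Fin n => (i : ℕ) < m), z i) / m

/-- Biased sample variance of the first `m` entries. -/
noncomputable def varM {n : ℕ} (z : Fin n → ℝ) (m : ℕ) : ℝ :=
  (∑ i ∈ Finset.univ.filter (fun i : Fin n => (i : ℕ) < m), (z i - meanM z m)^2) / m

/-- `α(m, n, ρ) = 2ρm/n² + m/n − 1`. -/
noncomputable def alphaF (n : ℕ) (ρ : ℝ) (m : ℕ) : ℝ :=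
  2 * ρ * m / (n : ℝ)^2 + (m : ℝ) / n - 1

/-- The `m`-th entry `z_m` (1-indexed) of the vector `z`. -/
noncomputable def entry {n : ℕ} (z : Fin n → ℝ) (m : ℕ) : ℝ :=
  if h : m - 1 < n then z ⟨m - 1, h⟩ else 0

open Classical in
/-- The index set `I = {m ∈ {1,…,n} : α(m,n,ρ) > 0}`. -/
noncomputable def droIndex (n : ℕ) (ρ : ℝ) : Finset ℕ :=
  (Finset.Icc 1 n).filter (fun m => 0 < alphaF n ρ m)

open Finset in
lemma aux_card {n m : ℕ} (hm : m ≤ n) :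
    (univ.filter (fun i : Fin n => (i : ℕ) < m)).card = m := by
  rw [Fin.card_filter_val_lt]
  exact min_eq_right hm

open Finset in
lemma aux_sum1 {n m : ℕ} (hm : m ≤ n) (hm1 : 1 ≤ m) (z : Fin n → ℝ) (x : ℝ) :
    ∑ i ∈ univ.filter (fun i : Fin n => (i : ℕ) < m), (x - z i) = m * (x - meanM z m) := by
  have h0 : (m : ℝ) ≠ 0 := by positivity
  have hS : ∑ i ∈ univ.filter (fun i : Fin n => (i : ℕ) < m), z i = m * meanM z m := by
    unfold meanM; field_simp
  rw [sum_sub_distrib, sum_const, aux_card hm, hS, nsmul_eq_mul]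
  ring

open Finset in
lemma aux_sum2 {n m : ℕ} (hm : m ≤ n) (hm1 : 1 ≤ m) (z : Fin n → ℝ) (x : ℝ) :
    ∑ i ∈ univ.filter (fun i : Fin n => (i : ℕ) < m), (x - z i) ^ 2
      = m * (varM z m + (x - meanM z m) ^ 2) := by
  have h0 : (m : ℝ) ≠ 0 := by positivity
  have hS : ∑ i ∈ univ.filter (fun i : Fin n => (i : ℕ) < m), (z i - meanM z m) ^ 2
      = m * varM z m := by
    unfold varM; field_simp
  have h1 := aux_sum1 hm hm1 z (meanM z m)
  have : ∀ i : Fin n, (x - z i) ^ 2 = (z i - meanM z m) ^ 2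
      + 2 * (x - meanM z m) * (meanM z m - z i) + (x - meanM z m) ^ 2 := fun i => by ring
  rw [sum_congr rfl (fun i _ => this i), sum_add_distrib, sum_add_distrib, hS, ← mul_sum, h1,
    sum_const, aux_card hm, nsmul_eq_mul]
  ring

open Finset in
lemma aux_entry_le {n m : ℕ} (hm : m ≤ n) (hm2 : 2 ≤ m) (z : Fin n → ℝ) (hz : StrictMono z)
    (i : Fin n) (hi : (i : ℕ) < m) : z i ≤ entry z m := by
  unfold entry
  rw [dif_pos (by omega)]
  apply hz.monotone
  rw [Fin.le_def]; simp only; omega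

open Finset in
lemma aux_gap {n m : ℕ} (hm : m ≤ n) (hm2 : 2 ≤ m) (z : Fin n → ℝ) (hz : StrictMono z) :
    0 < entry z m - meanM z m := by
  have h := aux_sum1 hm (by omega) z (entry z m)
  have hpos : 0 < ∑ i ∈ univ.filter (fun i : Fin n => (i : ℕ) < m), (entry z m - z i) := by
    apply sum_pos'
    · intro i hi
      have := aux_entry_le hm hm2 z hz i (by simpa using hi)
      linarith
    · refine ⟨⟨0, by omega⟩, by simp; omega, ?_⟩
      have : z ⟨0, by omega⟩ < entry z m := by
        unfold entry
        rw [dif_pos (by omega)]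
        apply hz
        rw [Fin.lt_def]; simp only; omega
      linarith
  rw [h] at hpos
  exact pos_of_mul_pos_right hpos (by positivity)

open Finset in
lemma aux_var {n m : ℕ} (hm : m ≤ n) (hm2 : 2 ≤ m) (z : Fin n → ℝ) (hz : StrictMono z) :
    0 < varM z m := by
  have hg := aux_gap hm hm2 z hz
  unfold varM
  apply div_pos _ (by positivity)
  apply sum_pos'
  · intro i _; positivity
  · refine ⟨⟨m - 1, by omega⟩, by simp; omega, ?_⟩
    unfold entry at hg
    rw [dif_pos (by omega)] at hg
    positivity

open Finset in
lemma aux_ball {n : ℕ} (hn : 2 ≤ n) (ρ : ℝ) (p : Fin n → ℝ) (h0 : ∀ i, 0 ≤ p i)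
    (h1 : ∑ i, p i = 1) :
    p ∈ chiSqBall n ρ ↔ ∑ i, p i ^ 2 ≤ (2 * ρ + n) / (n : ℝ) ^ 2 := by
  have hn0 : (0 : ℝ) < n := by positivity
  have key : ∑ i, ((n : ℝ) * p i - 1) ^ 2 = (n : ℝ) ^ 2 * ∑ i, p i ^ 2 - n := by
    have : ∀ i, ((n : ℝ) * p i - 1) ^ 2 = (n : ℝ) ^ 2 * p i ^ 2 - 2 * n * p i + 1 :=
      fun i => by ring
    rw [sum_congr rfl (fun i _ => this i), sum_add_distrib, sum_sub_distrib, ← mul_sum, ← mul_sum,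
      h1]
    simp
    ring
  unfold chiSqBall
  simp only [Set.mem_ofPred_eq, key]
  rw [le_div_iff₀ (by positivity)]
  constructor
  · rintro ⟨-, -, h⟩; linarith
  · intro h; exact ⟨h0, h1, by linarith⟩

lemma aux_alpha {n : ℕ} (hn : 2 ≤ n) (ρ : ℝ) (m : ℕ) :
    alphaF n ρ m = (2 * ρ + n) / (n : ℝ) ^ 2 * m - 1 := by
  have hn0 : (0 : ℝ) < n := by positivity
  unfold alphaF
  field_simp

/-- each candidate value is attained -/
lemma aux_feas {n m : ℕ} (hn : 2 ≤ n) (ρ : ℝ) (hm : m ≤ n) (hm2 : 2 ≤ m) (z : Fin n → ℝ)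
    (hz : StrictMono z) (ha : 0 < alphaF n ρ m) :
    ∃ p ∈ chiSqBall n ρ, ∑ i, p i * z i = meanM z m - min (Real.sqrt (alphaF n ρ m * varM z m))
            (varM z m / (entry z m - meanM z m)) := by
  have hg := aux_gap hm hm2 z hz
  have hv := aux_var hm hm2 z hz
  have hm0 : (0 : ℝ) < m := by positivity
  set v := varM z m with hvdef
  set μ := meanM z m with hμ
  set D := min (Real.sqrt (alphaF n ρ m * v)) (v / (entry z m - μ)) with hD
  have hD0 : 0 ≤ D := le_min (Real.sqrt_nonneg _) (by positivity)
  have hD1 : D ^ 2 ≤ alphaF n ρ m * v := by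
    have : D ≤ Real.sqrt (alphaF n ρ m * v) := min_le_left _ _
    calc D ^ 2 ≤ (Real.sqrt (alphaF n ρ m * v)) ^ 2 := by gcongr
      _ = _ := Real.sq_sqrt (by positivity)
  have hD2 : D * (entry z m - μ) ≤ v := by
    have : D ≤ v / (entry z m - μ) := min_le_right _ _
    rwa [le_div_iff₀ hg] at this
  set t := D / v with ht
  have htD : D = t * v := by rw [ht]; field_simp
  have ht0 : 0 ≤ t := by positivity
  have hs1 := aux_sum1 hm (by omega) z μ
  have hs2 := aux_sum2 hm (by omega) z μ
  rw [← hμ] at hs1 hs2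
  rw [← hvdef] at hs2
  have hcard := aux_card hm
  let p : Fin n → ℝ := fun i => if (i : ℕ) < m then (1 + t * (μ - z i)) / m else 0
  have hp0 : ∀ i, 0 ≤ p i := by
    intro i
    simp only [p]
    split_ifs with h
    · have h1 := aux_entry_le hm hm2 z hz i h
      have h2 : t * (entry z m - μ) ≤ 1 := by
        rw [htD] at hD2
        have : (t * (entry z m - μ)) * v ≤ 1 * v := by linarith
        exact le_of_mul_le_mul_right this hv
      have h3 : t * (z i - μ) ≤ t * (entry z m - μ) := by gcongr
      apply div_nonneg _ hm0.le
      linarith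
    · exact le_rfl
  have hp1 : ∑ i, p i = 1 := by
    simp only [p]
    rw [← Finset.sum_filter, ← Finset.sum_div, Finset.sum_add_distrib, ← Finset.mul_sum, hs1,
      Finset.sum_const, hcard]
    rw [sub_self, mul_zero, mul_zero, add_zero, nsmul_eq_mul, mul_one]
    exact div_self hm0.ne'
  have hp2 : ∑ i, p i ^ 2 = (1 + t ^ 2 * v) / m := by
    have : ∀ i, p i ^ 2 = if (i : ℕ) < m then
        (1 + 2 * t * (μ - z i) + t ^ 2 * (μ - z i) ^ 2) / (m : ℝ) ^ 2 else 0 := by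
      intro i
      simp only [p]
      split_ifs
      · rw [div_pow]; ring
      · simp
    rw [Finset.sum_congr rfl (fun i _ => this i), ← Finset.sum_filter, ← Finset.sum_div,
      Finset.sum_add_distrib, Finset.sum_add_distrib, ← Finset.mul_sum, ← Finset.mul_sum, hs1, hs2,
      Finset.sum_const, hcard]
    simp
    field_simp
  have hp3 : ∑ i, p i * z i = μ - D := by
    have : ∀ i, p i * z i = μ * p i - if (i : ℕ) < m then
        ((μ - z i) + t * (μ - z i) ^ 2) / (m : ℝ) else 0 := by
      intro i
      simp only [p]
      split_ifs
      · field_simp; ring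
      · simp
    rw [Finset.sum_congr rfl (fun i _ => this i), Finset.sum_sub_distrib, ← Finset.mul_sum, hp1,
      ← Finset.sum_filter, ← Finset.sum_div,
      Finset.sum_add_distrib, ← Finset.mul_sum, hs1, hs2, htD]
    field_simp
    ring
  refine ⟨p, ?_, hp3⟩
  rw [aux_ball hn ρ p hp0 hp1, hp2, div_le_iff₀ hm0]
  have h5 := aux_alpha hn ρ m
  have : (t ^ 2 * v) * v ≤ alphaF n ρ m * v := by
    rw [htD] at hD1; nlinarith
  have := le_of_mul_le_mul_right this hv
  linarith

/-- some candidate is a lower bound -/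
lemma aux_lower {n : ℕ} (hn : 2 ≤ n) (ρ : ℝ) (hρ0 : 0 < ρ)
    (hρ : ρ < (n : ℝ) * ((n : ℝ) - 1) / 2)
    (z : Fin n → ℝ) (hz : StrictMono z) :
    ∃ m ∈ droIndex n ρ, ∀ p ∈ chiSqBall n ρ,
      meanM z m - min (Real.sqrt (alphaF n ρ m * varM z m))
            (varM z m / (entry z m - meanM z m)) ≤ ∑ i, p i * z i := by
  have hn0 : (0 : ℝ) < n := by positivity
  set R : ℝ := (2 * ρ + n) / (n : ℝ) ^ 2 with hR
  have hR0 : 0 < R := by positivity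
  have hR1 : R < 1 := by
    rw [hR, div_lt_one (by positivity)]; nlinarith
  have hRn : 0 < R * n - 1 := by
    have : R * n - 1 = 2 * ρ / n := by rw [hR]; field_simp; ring
    rw [this]; positivity
  let f : ℝ → ℝ := fun c => ∑ i, (max (c - z i) 0) ^ 2 - R * (∑ i, max (c - z i) 0) ^ 2
  have hf : Continuous f := by fun_prop
  -- general evaluation
  have hW : ∀ c : ℝ, ∀ m : ℕ, m ≤ n → 1 ≤ m → (∀ i : Fin n, (i : ℕ) < m → z i ≤ c) →
      (∀ i : Fin n, ¬ (i : ℕ) < m → c ≤ z i) →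
      ∑ i, max (c - z i) 0 = m * (c - meanM z m) ∧
      ∑ i, (max (c - z i) 0) ^ 2 = m * (varM z m + (c - meanM z m) ^ 2) := by
    intro c m hm hm1 h1 h2
    rw [← aux_sum1 hm hm1 z c, ← aux_sum2 hm hm1 z c, Finset.sum_filter, Finset.sum_filter]
    constructor
    · apply Finset.sum_congr rfl
      intro i _
      split_ifs with h
      · exact max_eq_left (by linarith [h1 i h])
      · exact max_eq_right (by linarith [h2 i h])
    · apply Finset.sum_congr rfl
      intro i _
      split_ifs with h
      · rw [max_eq_left (by linarith [h1 i h])]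
      · rw [max_eq_right (by linarith [h2 i h])]; norm_num
  let i0 : Fin n := ⟨0, by omega⟩
  let i1 : Fin n := ⟨1, by omega⟩
  have h01 : z i0 < z i1 := hz (by simp [i0, i1, Fin.lt_def])
  have hf1 : 0 < f (z i1) := by
    obtain ⟨e1, e2⟩ := hW (z i1) 1 (by omega) le_rfl
      (by intro i hi; apply hz.monotone; rw [Fin.le_def]; simp only [i1]; omega)
      (by intro i hi; apply hz.monotone; rw [Fin.le_def]; simp only [i1]; omega)
    have hv1 : 0 ≤ varM z 1 := by unfold varM; positivity
    have hmean : meanM z 1 = z i0 := by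
      have : (Finset.univ.filter (fun i : Fin n => (i : ℕ) < 1)) = {i0} := by
        ext i; simp [i0, Fin.ext_iff]
      unfold meanM; rw [this]; simp
    have : 0 < (1 - R) * (z i1 - z i0) ^ 2 := by
      apply mul_pos (by linarith)
      have : 0 < z i1 - z i0 := by linarith
      positivity
    simp only [f]
    rw [e1, e2, hmean]
    push_cast
    nlinarith
  have hgn := aux_gap le_rfl hn z hz
  have hvn := aux_var le_rfl hn z hz
  obtain ⟨b, hb1, hb2⟩ : ∃ b, z i1 ≤ b ∧ f b < 0 := by
    set A := (entry z n - meanM z n) + 1 + varM z n / (R * n - 1) with hA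
    have hA0 : 0 < varM z n / (R * n - 1) := by positivity
    have hA1 : 1 ≤ A := by linarith
    have hle : ∀ i, z i ≤ meanM z n + A := by
      intro i
      have := aux_entry_le le_rfl hn z hz i i.2
      linarith
    refine ⟨meanM z n + A, hle _, ?_⟩
    obtain ⟨e1, e2⟩ := hW (meanM z n + A) n le_rfl (by omega) (fun i _ => hle i)
      (fun i hi => absurd i.2 hi)
    simp only [f]
    rw [e1, e2]
    have h1 : varM z n < (R * n - 1) * A := by
      have : varM z n / (R * n - 1) < A := by linarith
      rw [div_lt_iff₀ hRn] at this; linarith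
    have h2 : (R * n - 1) * A ≤ (R * n - 1) * A ^ 2 := by
      apply mul_le_mul_of_nonneg_left _ hRn.le; nlinarith
    have : (n : ℝ) * (varM z n + (meanM z n + A - meanM z n) ^ 2)
        - R * (n * (meanM z n + A - meanM z n)) ^ 2 = n * (varM z n - (R * n - 1) * A ^ 2) := by
      ring
    rw [this]
    exact mul_neg_of_pos_of_neg hn0 (by linarith)
  obtain ⟨c, ⟨hc1, hc2⟩, hc⟩ : ∃ c ∈ Set.Icc (z i1) b, f c = 0 := by
    have := intermediate_value_Icc' hb1 hf.continuousOn
    exact this ⟨hb2.le, hf1.le⟩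
  have hc1' : z i1 < c := by
    rcases hc1.lt_or_eq with h | h
    · exact h
    · rw [← h] at hc; linarith
  obtain ⟨k, hk, hkmax⟩ := Finset.exists_max_image (Finset.univ.filter (fun i => z i < c)) id
    ⟨i1, by simpa using hc1'⟩
  simp only [Finset.mem_filter, Finset.mem_univ, true_and, id] at hk hkmax
  have hk1 : i1 ≤ k := hkmax _ hc1'
  obtain ⟨m, hmk⟩ : ∃ m : ℕ, m = k + 1 := ⟨_, rfl⟩
  have hm : m ≤ n := by have := k.2; omega
  have hm2 : 2 ≤ m := by
    rw [Fin.le_def] at hk1; simp only [i1] at hk1; omega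
  have hm0 : (0 : ℝ) < m := by positivity
  obtain ⟨e1, e2⟩ := hW c m hm (by omega)
    (by
      intro i hi
      have : z i ≤ z k := hz.monotone (by rw [Fin.le_def]; omega)
      linarith)
    (by
      intro i hi
      by_contra h
      have := hkmax i (by linarith)
      rw [Fin.le_def] at this
      omega)
  have hg := aux_gap hm hm2 z hz
  have hv := aux_var hm hm2 z hz
  have hent : entry z m = z k := by
    unfold entry
    rw [dif_pos (by omega)]
    congr 1
    rw [Fin.ext_iff]; simp only; omega
  have hα := aux_alpha hn ρ m
  rw [← hR] at hα
  set a := c - meanM z m with ha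
  set v := varM z m with hvdef
  have hga : entry z m - meanM z m ≤ a := by rw [hent]; linarith
  have ha0 : 0 < a := lt_of_lt_of_le hg hga
  have heq : v = alphaF n ρ m * a ^ 2 := by
    simp only [f] at hc
    rw [e1, e2] at hc
    have : (m : ℝ) * (v - (R * m - 1) * a ^ 2) = 0 := by linarith
    rcases mul_eq_zero.mp this with h | h
    · exact absurd h hm0.ne'
    · rw [hα]; linarith
  have hαpos : 0 < alphaF n ρ m := by
    rw [heq] at hv; exact pos_of_mul_pos_left hv (by positivity)
  refine ⟨m, ?_, ?_⟩
  · unfold droIndex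
    simp only [Finset.mem_filter, Finset.mem_Icc]
    exact ⟨⟨by omega, hm⟩, hαpos⟩
  intro p hp
  have hmin : v / a ≤ min (Real.sqrt (alphaF n ρ m * v)) (v / (entry z m - meanM z m)) := by
    apply le_min
    · apply Real.le_sqrt_of_sq_le
      apply le_of_eq
      rw [div_pow, div_eq_iff (by positivity)]
      linear_combination v * heq
    · gcongr
  have hp' := hp
  obtain ⟨hp0, hp1, -⟩ := hp'
  rw [aux_ball hn ρ p hp0 hp1, ← hR] at hp
  have hz1 : ∑ i, p i * z i = c - ∑ i, p i * (c - z i) := by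
    have : ∀ i, p i * (c - z i) = c * p i - p i * z i := fun i => by ring
    rw [Finset.sum_congr rfl (fun i _ => this i), Finset.sum_sub_distrib, ← Finset.mul_sum, hp1]
    ring
  have hz2 : ∑ i, p i * (c - z i) ≤ ∑ i, p i * max (c - z i) 0 := by
    apply Finset.sum_le_sum
    intro i _
    exact mul_le_mul_of_nonneg_left (le_max_left _ _) (hp0 i)
  have hcs := Finset.sum_mul_sq_le_sq_mul_sq Finset.univ p (fun i => max (c - z i) 0)
  have hwsq : ∑ i, (max (c - z i) 0) ^ 2 = R * (m * a) ^ 2 := by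
    simp only [f] at hc
    rw [e1] at hc
    linarith
  rw [hwsq] at hcs
  have hz3 : ∑ i, p i * max (c - z i) 0 ≤ R * (m * a) := by
    refine (abs_le_of_sq_le_sq' ?_ (by positivity)).2
    refine hcs.trans ?_
    calc (∑ i, p i ^ 2) * (R * (m * a) ^ 2) ≤ R * (R * (m * a) ^ 2) := by gcongr
      _ = _ := by ring
  have hfin : R * (m * a) = a + v / a := by
    rw [heq, hα]; field_simp; ring
  linarith

theorem stmt3 (n : ℕ) (hn : 2 ≤ n) (ρ : ℝ) (hρ0 : 0 < ρ)
    (hρ : ρ < (n : ℝ) * ((n : ℝ) - 1) / 2)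
    (z : Fin n → ℝ) (hz : StrictMono z) :
    n ∈ droIndex n ρ ∧
      (∀ m ∈ droIndex n ρ, 2 ≤ m) ∧
      ∀ hI : (droIndex n ρ).Nonempty,
        droOPT n ρ z = (droIndex n ρ).inf' hI (fun m =>
          meanM z m - min (Real.sqrt (alphaF n ρ m * varM z m))
            (varM z m / (entry z m - meanM z m))) := by
  have hn0 : (0 : ℝ) < n := by positivity
  have h2 : ∀ m ∈ droIndex n ρ, 2 ≤ m := by
    intro m hm
    unfold droIndex at hm
    simp only [Finset.mem_filter, Finset.mem_Icc] at hm
    obtain ⟨⟨h1, -⟩, hα⟩ := hm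
    by_contra h
    have : m = 1 := by omega
    rw [aux_alpha hn, this] at hα
    have : (2 * ρ + n) / (n : ℝ) ^ 2 < 1 := by
      rw [div_lt_one (by positivity)]; nlinarith
    push_cast at hα
    linarith
  refine ⟨?_, h2, ?_⟩
  · unfold droIndex
    simp only [Finset.mem_filter, Finset.mem_Icc]
    refine ⟨⟨by omega, le_rfl⟩, ?_⟩
    have : alphaF n ρ n = 2 * ρ / n := by unfold alphaF; field_simp; ring
    rw [this]; positivity
  intro hI
  obtain ⟨m, hmI, hlow⟩ := aux_lower hn ρ hρ0 hρ z hz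
  have hfe : ∀ m ∈ droIndex n ρ, ∃ p ∈ chiSqBall n ρ, ∑ i, p i * z i
      = meanM z m - min (Real.sqrt (alphaF n ρ m * varM z m))
            (varM z m / (entry z m - meanM z m)) := by
    intro m hm
    have hm2 := h2 m hm
    unfold droIndex at hm
    simp only [Finset.mem_filter, Finset.mem_Icc] at hm
    exact aux_feas hn ρ hm.1.2 hm2 z hz hm.2
  have hbdd : BddBelow ((fun p => ∑ i, p i * z i) '' chiSqBall n ρ) := by
    refine ⟨meanM z m - min (Real.sqrt (alphaF n ρ m * varM z m))
            (varM z m / (entry z m - meanM z m)), ?_⟩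
    rintro _ ⟨p, hp, rfl⟩
    exact hlow p hp
  unfold droOPT
  apply le_antisymm
  · apply Finset.le_inf'
    intro k hk
    obtain ⟨p, hp, hpe⟩ := hfe k hk
    rw [← hpe]
    exact csInf_le hbdd ⟨p, hp, rfl⟩
  · refine (Finset.inf'_le _ hmI).trans ?_
    apply le_csInf
    · obtain ⟨p, hp, -⟩ := hfe m hmI
      exact ⟨_, p, hp, rfl⟩
    · rintro _ ⟨p, hp, rfl⟩
      exact hlow p hp
end

section
/- Let n ≥ 2 be an integer and 0 < ρ < n(n−1)/2, and let z ∈ ℝⁿ have distinct sorted entries z_1 < z_2 < ⋯ < z_n, with mean z̄_n and sample variance s_n². Then z̄_n − inf_{p ∈ P_{ρ,n}} ∑_{i=1}^n p_i z_i ≥ min( √(2ρ s_n²/n), s_n²/(z_n − z̄_n) ). -/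
theorem stmt4 (n : ℕ) (hn : 2 ≤ n) (ρ : ℝ) (hρ0 : 0 < ρ)
    (hρ : ρ < (n : ℝ) * ((n : ℝ) - 1) / 2)
    (z : Fin n → ℝ) (hz : StrictMono z) :
    min (Real.sqrt (2 * ρ * vecVar z / n)) (vecVar z / (z ⟨n - 1, by omega⟩ - vecMean z))
      ≤ vecMean z - droOPT n ρ z := by
  have hn0 : (0 : ℝ) < n := by
    have : 0 < n := by omega
    exact_mod_cast this
  have hle : ∀ i, z i ≤ z ⟨n - 1, by omega⟩ := fun i => hz.monotone (by
    rw [Fin.le_def]; have := i.2; simp only; omega)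
  have hlt : z ⟨0, by omega⟩ < z ⟨n - 1, by omega⟩ := hz (by
    rw [Fin.lt_def]; simp only; omega)
  generalize z ⟨n - 1, by omega⟩ = M at *
  have hsum : ∑ i, z i = n * vecMean z := by
    unfold vecMean; field_simp
  have hvar : ∑ i, (z i - vecMean z)^2 = n * vecVar z := by
    unfold vecVar; field_simp
  generalize vecMean z = m at *
  generalize vecVar z = V at *
  have hD : 0 < M - m := by
    have h : ∑ i, z i < ∑ _i : Fin n, M :=
      Finset.sum_lt_sum (fun i _ => hle i) ⟨⟨0, by omega⟩, Finset.mem_univ _, hlt⟩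
    rw [hsum] at h
    simp only [Finset.sum_const, Finset.card_univ, Fintype.card_fin, nsmul_eq_mul] at h
    have := lt_of_mul_lt_mul_left h hn0.le
    linarith
  have hV : 0 < V := by
    have h : 0 < ∑ i, (z i - m)^2 := by
      by_contra hcon
      have h0 : ∑ i, (z i - m)^2 = 0 :=
        le_antisymm (not_lt.mp hcon) (Finset.sum_nonneg fun i _ => sq_nonneg _)
      rw [Finset.sum_eq_zero_iff_of_nonneg (fun i _ => sq_nonneg _)] at h0
      have a := h0 ⟨0, by omega⟩ (Finset.mem_univ _)
      have b := h0 ⟨1, by omega⟩ (Finset.mem_univ _)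
      have a' := pow_eq_zero_iff (two_ne_zero) |>.mp a
      have b' := pow_eq_zero_iff (two_ne_zero) |>.mp b
      have : z ⟨0, by omega⟩ < z ⟨1, by omega⟩ := hz (by rw [Fin.lt_def]; simp)
      linarith
    rw [hvar] at h
    exact (mul_pos_iff_of_pos_left hn0).mp h
  obtain ⟨c, hc⟩ : ∃ c, c = min (Real.sqrt (2 * ρ * V / n)) (V / (M - m)) := ⟨_, rfl⟩
  have hc0 : 0 ≤ c := by rw [hc]; positivity
  have hc1 : c ≤ Real.sqrt (2 * ρ * V / n) := hc ▸ min_le_left _ _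
  have hc2 : c ≤ V / (M - m) := hc ▸ min_le_right _ _
  rw [← hc]
  have hcsq : c^2 ≤ 2 * ρ * V / n := by
    rw [← Real.sq_sqrt (show 0 ≤ 2 * ρ * V / n by positivity)]
    gcongr
  have hcD : c * (M - m) ≤ V := (le_div_iff₀ hD).mp hc2
  have hdev : ∑ i, (z i - m) = 0 := by
    rw [Finset.sum_sub_distrib, hsum]; simp
  have hbdd : BddBelow ((fun p : Fin n → ℝ => ∑ i, p i * z i) '' chiSqBall n ρ) := by
    refine ⟨z ⟨0, by omega⟩, ?_⟩
    rintro _ ⟨p, ⟨hp, hp1, _⟩, rfl⟩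
    calc z ⟨0, by omega⟩ = ∑ i, p i * z ⟨0, by omega⟩ := by
          rw [← Finset.sum_mul, hp1, one_mul]
      _ ≤ _ := Finset.sum_le_sum fun i _ =>
          mul_le_mul_of_nonneg_left (hz.monotone (by rw [Fin.le_def]; simp)) (hp i)
  have hmem : (fun i => 1 / (n : ℝ) - c / (n * V) * (z i - m)) ∈ chiSqBall n ρ := by
    refine ⟨fun i => ?_, ?_, ?_⟩
    · have h1 : c * (z i - m) ≤ V :=
        le_trans (mul_le_mul_of_nonneg_left (by linarith [hle i]) hc0) hcD
      have : 1 / (n : ℝ) - c / (n * V) * (z i - m) = (V - c * (z i - m)) / (n * V) := by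
        field_simp
      simp only [this]
      exact div_nonneg (by linarith) (by positivity)
    · rw [Finset.sum_sub_distrib, ← Finset.mul_sum, hdev]
      simp [hn0.ne']
    · have : ∀ i, ((n : ℝ) * (1 / (n : ℝ) - c / (n * V) * (z i - m)) - 1)^2
          = c^2 / V^2 * (z i - m)^2 := by
        intro i; field_simp; ring
      simp only [this]
      rw [← Finset.mul_sum, hvar]
      have h2 : 1 / 2 * (c^2 / V^2 * (n * V)) = c^2 * (n / (2 * V)) := by
        field_simp
      rw [h2]
      calc c^2 * (n / (2 * V)) ≤ 2 * ρ * V / n * (n / (2 * V)) := by gcongr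
        _ = ρ := by field_simp
  have hval : ∑ i, (1 / (n : ℝ) - c / (n * V) * (z i - m)) * z i = m - c := by
    have : ∀ i, (1 / (n : ℝ) - c / (n * V) * (z i - m)) * z i
        = 1 / n * z i - c / (n * V) * (z i - m)^2 - c / (n * V) * m * (z i - m) := by
      intro i; ring
    simp only [this]
    rw [Finset.sum_sub_distrib, Finset.sum_sub_distrib, ← Finset.mul_sum, ← Finset.mul_sum,
      ← Finset.mul_sum, hdev, hvar, hsum]
    field_simp; ring
  have := csInf_le hbdd ⟨_, hmem, rfl⟩
  simp only [hval] at this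
  unfold droOPT
  linarith
end

section
/- Fix an integer n ≥ 2, reals ρ > 0 and B > 0, and define h : ℝⁿ → ℝ by h(z) = min_{p ∈ P_{ρ,n}} ∑_{i=1}^n p_i z_i. Let K = {z ∈ [0,B]ⁿ : s_n²(z) ≥ 2ρB²/n}, the set of points satisfying the high sample variance condition. Then h is Fréchet differentiable at every z ∈ K, and the gradient map z ↦ ∇h(z) is Lipschitz on K (with respect to the Euclidean norm) with Lipschitz constant at most 2√(2ρ)/n^{3/2} + 2/(Bn). -/
/-- The robust objective `h(z) = min_{p ∈ P_{ρ,n}} ⟨z, p⟩` on Euclidean space. -/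
noncomputable def hFun (n : ℕ) (ρ : ℝ) (z : EuclideanSpace ℝ (Fin n)) : ℝ :=
  sInf ((fun p => ∑ i, p i * z i) '' chiSqBall n ρ)

lemma le_of_sq_le_sq_aux {a b : ℝ} (h : a ^ 2 ≤ b ^ 2) (hb : 0 ≤ b) : a ≤ b :=
  (le_abs_self a).trans (abs_le_of_sq_le_sq h hb)

/-- mean as a continuous linear functional -/
noncomputable def meanL (n : ℕ) : EuclideanSpace ℝ (Fin n) →L[ℝ] ℝ :=
  (n : ℝ)⁻¹ • innerSL ℝ (WithLp.toLp 2 (fun _ => (1 : ℝ)) : EuclideanSpace ℝ (Fin n))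

/-- centering map -/
noncomputable def cenL (n : ℕ) : EuclideanSpace ℝ (Fin n) →L[ℝ] EuclideanSpace ℝ (Fin n) :=
  ContinuousLinearMap.id ℝ _ -
    (meanL n).smulRight (WithLp.toLp 2 (fun _ => (1 : ℝ)) : EuclideanSpace ℝ (Fin n))

lemma meanL_apply {n : ℕ} (z : EuclideanSpace ℝ (Fin n)) :
    meanL n z = vecMean (fun i => z i) := by
  simp [meanL, vecMean, PiLp.inner_apply, div_eq_inv_mul]

lemma cenL_apply {n : ℕ} (z : EuclideanSpace ℝ (Fin n)) (i : Fin n) :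
    cenL n z i = z i - vecMean (fun i => z i) := by
  simp [cenL, meanL_apply]

lemma cenL_sum {n : ℕ} (hn : 2 ≤ n) (z : EuclideanSpace ℝ (Fin n)) :
    ∑ i, cenL n z i = 0 := by
  have : (n : ℝ) ≠ 0 := by positivity
  simp only [cenL_apply, Finset.sum_sub_distrib, vecMean]
  simp
  field_simp
  simp

lemma cenL_normsq {n : ℕ} (hn : 2 ≤ n) (z : EuclideanSpace ℝ (Fin n)) :
    ‖cenL n z‖ ^ 2 = n * vecVar (fun i => z i) := by
  have : (n : ℝ) ≠ 0 := by positivity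
  rw [EuclideanSpace.real_norm_sq_eq]
  simp only [cenL_apply, vecVar]
  field_simp

lemma cenL_norm_le {n : ℕ} (hn : 2 ≤ n) (z : EuclideanSpace ℝ (Fin n)) :
    ‖cenL n z‖ ≤ ‖z‖ := by
  have h1 := cenL_sum hn z
  have h2 : ‖z‖ ^ 2 = ‖cenL n z‖ ^ 2 + n * (meanL n z) ^ 2 := by
    have hz : ∀ i, (z i) ^ 2 = (cenL n z i) ^ 2 + 2 * meanL n z * cenL n z i + (meanL n z) ^ 2 :=
      fun i => by rw [cenL_apply, meanL_apply]; ring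
    rw [EuclideanSpace.real_norm_sq_eq, EuclideanSpace.real_norm_sq_eq]
    simp only [hz]
    rw [Finset.sum_add_distrib, Finset.sum_add_distrib, ← Finset.mul_sum, h1]
    simp
  have h3 : 0 ≤ n * (meanL n z) ^ 2 := by positivity
  exact le_of_sq_le_sq_aux (by linarith) (norm_nonneg _)

lemma formula {n : ℕ} (hn : 2 ≤ n) {ρ : ℝ} (hρ : 0 < ρ) (z : EuclideanSpace ℝ (Fin n))
    (h0 : 0 < ‖cenL n z‖) (h : ∀ i, √(2 * ρ) * cenL n z i ≤ ‖cenL n z‖) :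
    hFun n ρ z = meanL n z - √(2 * ρ) / n * ‖cenL n z‖ := by
  have hn0 : (0 : ℝ) < n := by positivity
  have hs : √(2 * ρ) ^ 2 = 2 * ρ := Real.sq_sqrt (by positivity)
  have hS := cenL_sum hn z
  have hN := EuclideanSpace.real_norm_sq_eq (cenL n z)
  have hz : ∀ i, z i = cenL n z i + meanL n z := fun i => by
    rw [cenL_apply, meanL_apply]; ring
  set m := meanL n z
  set N := ‖cenL n z‖ with hNdef
  set s := √(2 * ρ)
  have hs0 : 0 ≤ s := Real.sqrt_nonneg _
  unfold hFun
  apply IsLeast.csInf_eq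
  constructor
  · refine ⟨fun i => (1 - s / N * cenL n z i) / n, ⟨?_, ?_, ?_⟩, ?_⟩
    · intro i
      have : s / N * cenL n z i ≤ 1 := by
        rw [div_mul_eq_mul_div, div_le_one h0]; exact h i
      exact div_nonneg (by linarith) hn0.le
    · rw [← Finset.sum_div, Finset.sum_sub_distrib, ← Finset.mul_sum, hS]
      simp [hn0.ne']
    · have : ∀ i, ((n : ℝ) * ((1 - s / N * cenL n z i) / n) - 1) ^ 2 =
          (s / N) ^ 2 * (cenL n z i) ^ 2 := fun i => by
        field_simp; ring
      simp only [this]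
      rw [← Finset.mul_sum, ← hN, div_pow, hs]
      apply le_of_eq
      field_simp
    · have : ∀ i, (1 - s / N * cenL n z i) / n * z i =
        (cenL n z i + m - s / N * (cenL n z i) ^ 2 - s / N * m * cenL n z i) / n := fun i => by
        rw [hz i]; ring
      simp only [this]
      rw [← Finset.sum_div, Finset.sum_sub_distrib, Finset.sum_sub_distrib,
        Finset.sum_add_distrib, ← Finset.mul_sum, ← Finset.mul_sum, ← hN, hS]
      simp
      field_simp
  · rintro _ ⟨p, ⟨hp0, hp1, hp2⟩, rfl⟩
    let u : EuclideanSpace ℝ (Fin n) := WithLp.toLp 2 (fun i => n * p i - 1)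
    have hu : ‖u‖ ≤ s := by
      apply Real.le_sqrt_of_sq_le
      rw [EuclideanSpace.real_norm_sq_eq]
      simp only [u]
      linarith
    have hi : inner ℝ u (cenL n z) = n * (∑ i, p i * z i - m) := by
      have e : ∀ i, inner ℝ (u i) (cenL n z i) =
          n * (p i * z i) - n * m * p i - cenL n z i := fun i => by
        simp only [u, hz i]
        simp
        ring
      rw [PiLp.inner_apply]
      simp only [e]
      rw [Finset.sum_sub_distrib, Finset.sum_sub_distrib, ← Finset.mul_sum, ← Finset.mul_sum,
        hS, hp1]
      ring
    have h1 := abs_le.1 (abs_real_inner_le_norm u (cenL n z))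
    have h2 : ‖u‖ * N ≤ s * N := by gcongr
    have h3 : - (s * N) ≤ n * (∑ i, p i * z i - m) := by linarith [h1.1]
    have h4 : s / n * N = s * N / n := by ring
    show m - s / n * N ≤ ∑ i, p i * z i
    rw [h4, sub_le_iff_le_add, ← sub_le_iff_le_add', le_div_iff₀ hn0]
    linarith

lemma hasFDerivAt_norm' {E : Type*} [NormedAddCommGroup E] [InnerProductSpace ℝ E] (a : E)
    (ha : a ≠ 0) : HasFDerivAt (fun x : E => ‖x‖) (‖a‖⁻¹ • innerSL ℝ a) a := by
  have h := (hasStrictFDerivAt_norm_sq a).hasFDerivAt.sqrt (by simpa using ha)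
  have e : (fun x : E => √(‖x‖ ^ 2)) = fun x => ‖x‖ := by
    ext x; exact Real.sqrt_sq (norm_nonneg _)
  rw [e] at h
  convert h using 1
  ext x
  simp
  ring

lemma unit_diff {E : Type*} [NormedAddCommGroup E] [NormedSpace ℝ E] (a b : E) {r : ℝ}
    (hr : 0 < r) (ha : r ≤ ‖a‖) (hb : r ≤ ‖b‖) :
    ‖‖a‖⁻¹ • a - ‖b‖⁻¹ • b‖ ≤ 2 / r * ‖a - b‖ := by
  have ha0 : 0 < ‖a‖ := by linarith
  have hb0 : 0 < ‖b‖ := by linarith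
  have e : ‖a‖⁻¹ • a - ‖b‖⁻¹ • b = ‖a‖⁻¹ • ((a - b) + ((‖b‖ - ‖a‖) * ‖b‖⁻¹) • b) := by
    rw [sub_mul, mul_inv_cancel₀ hb0.ne', smul_add, smul_sub, smul_smul, mul_sub, sub_smul,
      ← mul_assoc, inv_mul_cancel₀ ha0.ne']
    simp
  have h2 : ‖((‖b‖ - ‖a‖) * ‖b‖⁻¹) • b‖ ≤ ‖a - b‖ := by
    rw [norm_smul, norm_mul, norm_inv, norm_norm, mul_assoc, inv_mul_cancel₀ hb0.ne', mul_one,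
      norm_sub_rev a b]
    exact abs_norm_sub_norm_le b a
  rw [e, norm_smul, norm_inv, norm_norm]
  calc ‖a‖⁻¹ * ‖(a - b) + ((‖b‖ - ‖a‖) * ‖b‖⁻¹) • b‖ ≤ r⁻¹ * (‖a - b‖ + ‖a - b‖) := by
        gcongr
        exact (norm_add_le _ _).trans (by gcongr)
    _ = _ := by ring

lemma key {n : ℕ} (hn : 2 ≤ n) {ρ B : ℝ} (hρ : 0 < ρ) (hB : 0 < B)
    (z : EuclideanSpace ℝ (Fin n))
    (hz : ∀ i, z i ∈ Set.Icc 0 B) (hv : 2 * ρ * B^2 / n ≤ vecVar (fun i => z i)) :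
    √(2 * ρ) * B ≤ ‖cenL n z‖ ∧
    HasFDerivAt (hFun n ρ) (meanL n - (√(2 * ρ) / n) •
      (innerSL ℝ (‖cenL n z‖⁻¹ • cenL n z)).comp (cenL n)) z := by
  have hn0 : (0 : ℝ) < n := by positivity
  have hs : √(2 * ρ) ^ 2 = 2 * ρ := Real.sq_sqrt (by positivity)
  have hs0 : 0 < √(2 * ρ) := by positivity
  have h1 : √(2 * ρ) * B ≤ ‖cenL n z‖ := by
    apply le_of_sq_le_sq_aux _ (norm_nonneg _)
    rw [cenL_normsq hn, mul_pow, hs]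
    rwa [div_le_iff₀' hn0] at hv
  have h0 : 0 < ‖cenL n z‖ := lt_of_lt_of_le (by positivity) h1
  refine ⟨h1, ?_⟩
  have hmean : 0 < vecMean (fun i => z i) := by
    have hnn : 0 ≤ ∑ i, z i := Finset.sum_nonneg fun i _ => (hz i).1
    rcases hnn.eq_or_lt with h | h
    · exfalso
      have := (Finset.sum_eq_zero_iff_of_nonneg fun i _ => (hz i).1).1 h.symm
      have hz0 : z = 0 := by ext i; simpa using this i (Finset.mem_univ _)
      rw [hz0] at h0
      simp at h0
    · exact div_pos h hn0
  have hlt : ∀ i, √(2 * ρ) * cenL n z i < ‖cenL n z‖ := fun i => by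
    refine lt_of_lt_of_le ?_ h1
    rw [cenL_apply]
    have := (hz i).2
    gcongr
    linarith
  have hev : ∀ᶠ x in nhds z, 0 < ‖cenL n x‖ ∧ ∀ i, √(2 * ρ) * cenL n x i < ‖cenL n x‖ := by
    have c1 : Continuous fun x => ‖cenL n x‖ := by fun_prop
    have c2 : ∀ i, Continuous fun x => √(2 * ρ) * cenL n x i := fun i => by fun_prop
    refine Filter.Eventually.and ?_ (Filter.eventually_all.2 fun i => ?_)
    · exact continuousAt_const.eventually_lt c1.continuousAt h0
    · exact (c2 i).continuousAt.eventually_lt c1.continuousAt (hlt i)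
  have hE : hFun n ρ =ᶠ[nhds z] fun x => meanL n x - √(2 * ρ) / n * ‖cenL n x‖ := by
    filter_upwards [hev] with x hx
    exact formula hn hρ x hx.1 fun i => (hx.2 i).le
  refine HasFDerivAt.congr_of_eventuallyEq ?_ hE
  have hN := (hasFDerivAt_norm' (cenL n z) (norm_pos_iff.1 h0)).comp z (cenL n).hasFDerivAt
  have := (meanL n).hasFDerivAt (x := z) |>.sub (hN.const_mul (√(2 * ρ) / n))
  rw [map_smul]
  exact this

theorem stmt7 (n : ℕ) (hn : 2 ≤ n) (ρ B : ℝ) (hρ : 0 < ρ) (hB : 0 < B) :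
    (∀ z : EuclideanSpace ℝ (Fin n),
        (∀ i, z i ∈ Set.Icc 0 B) → 2 * ρ * B^2 / n ≤ vecVar (fun i => z i) →
        DifferentiableAt ℝ (hFun n ρ) z) ∧
      ∀ z w : EuclideanSpace ℝ (Fin n),
        (∀ i, z i ∈ Set.Icc 0 B) → 2 * ρ * B^2 / n ≤ vecVar (fun i => z i) →
        (∀ i, w i ∈ Set.Icc 0 B) → 2 * ρ * B^2 / n ≤ vecVar (fun i => w i) →
        ‖fderiv ℝ (hFun n ρ) z - fderiv ℝ (hFun n ρ) w‖ ≤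
          (2 * Real.sqrt (2 * ρ) / Real.sqrt ((n : ℝ)^3) + 2 / (B * n)) * ‖z - w‖ := by
  refine ⟨fun z hz hv => (key hn hρ hB z hz hv).2.differentiableAt, ?_⟩
  intro z w hz hzv hw hwv
  obtain ⟨hz1, hz2⟩ := key hn hρ hB z hz hzv
  obtain ⟨hw1, hw2⟩ := key hn hρ hB w hw hwv
  have hn0 : (0 : ℝ) < n := by positivity
  have hs0 : 0 < √(2 * ρ) := by positivity
  rw [hz2.fderiv, hw2.fderiv, sub_sub_sub_cancel_left, ← smul_sub, ← ContinuousLinearMap.sub_comp,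
    ← map_sub, norm_smul]
  have hP : ‖cenL n‖ ≤ 1 := ContinuousLinearMap.opNorm_le_bound _ zero_le_one fun x => by
    simpa using cenL_norm_le hn x
  have hu := unit_diff (cenL n w) (cenL n z) (by positivity) hw1 hz1
  have hd : ‖cenL n w - cenL n z‖ ≤ ‖z - w‖ := by
    rw [← map_sub, norm_sub_rev z w]; exact cenL_norm_le hn _
  have hc := ContinuousLinearMap.opNorm_comp_le
    (innerSL ℝ (‖cenL n w‖⁻¹ • cenL n w - ‖cenL n z‖⁻¹ • cenL n z)) (cenL n)
  rw [innerSL_apply_norm] at hc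
  rw [Real.norm_of_nonneg (by positivity)]
  calc _ ≤ √(2 * ρ) / n * ((2 / (√(2 * ρ) * B) * ‖z - w‖) * 1) := by
        gcongr
        refine hc.trans ?_
        gcongr
        exact hu.trans (by gcongr)
    _ = 2 / (B * n) * ‖z - w‖ := by field_simp
    _ ≤ _ := by
        gcongr
        have : 0 ≤ 2 * √(2 * ρ) / √((n : ℝ)^3) := by positivity
        linarith
end

section
/- Let n ≥ 1 be an integer, ρ ≥ 0, z ∈ ℝⁿ, and let k = |{i : z_i = min_j z_j}| be the number of indices attaining the minimum value of z. Then inf_{p ∈ P_{ρ,n}} ∑_{i=1}^n p_i z_i = min_j z_j if and only if ρ ≥ n(n−k)/(2k). Moreover, when ρ ≥ n(n−k)/(2k), the infimum is attained by the vector p placing mass 1/k on each index i with z_i = min_j z_j and 0 elsewhere, and this p satisfies (1/2)∑_{i=1}^n (n p_i − 1)² = n(n−k)/(2k). -/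
theorem aux_chi (n : ℕ) (q : Fin n → ℝ) (h1 : ∑ i, q i = 1) :
    (1/2) * ∑ i, ((n : ℝ) * q i - 1)^2 = ((n:ℝ)^2 * ∑ i, (q i)^2 - n) / 2 := by
  have : ∀ i, ((n : ℝ) * q i - 1)^2 = (n:ℝ)^2 * (q i)^2 - 2 * n * q i + 1 := fun i => by ring
  simp only [this, Finset.sum_add_distrib, Finset.sum_sub_distrib, ← Finset.mul_sum, h1]
  simp
  ring

theorem aux_compact (n : ℕ) (ρ : ℝ) : IsCompact (chiSqBall n ρ) := by
  apply (isCompact_Icc (a := (0 : Fin n → ℝ)) (b := 1)).of_isClosed_subset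
  · have : chiSqBall n ρ = {p : Fin n → ℝ | ∀ i, 0 ≤ p i} ∩ ({p | ∑ i, p i = 1} ∩
        {p | (1/2) * ∑ i, ((n : ℝ) * p i - 1)^2 ≤ ρ}) := rfl
    rw [this]
    refine IsClosed.inter ?_ (IsClosed.inter ?_ ?_)
    · simp only [Set.setOf_forall]
      exact isClosed_iInter fun i => isClosed_le (by fun_prop) (by fun_prop)
    · exact isClosed_eq (by fun_prop) (by fun_prop)
    · exact isClosed_le (by fun_prop) (by fun_prop)
  · rintro q ⟨h0, h1, -⟩
    refine ⟨h0, fun i => ?_⟩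
    rw [Pi.one_apply, ← h1]
    exact Finset.single_le_sum (fun j _ => h0 j) (Finset.mem_univ i)

theorem aux_uniform (n : ℕ) (hn : 1 ≤ n) (ρ : ℝ) (hρ : 0 ≤ ρ) :
    (fun _ => 1 / (n:ℝ)) ∈ chiSqBall n ρ := by
  have : (n:ℝ) ≠ 0 := by positivity
  refine ⟨fun i => by positivity, by simp [this], ?_⟩
  simp [this, hρ]

open Classical in
theorem stmt10 (n : ℕ) (hn : 1 ≤ n) (ρ : ℝ) (hρ : 0 ≤ ρ) (z : Fin n → ℝ)
    (zmin : ℝ) (hzmin : zmin = Finset.univ.inf' ⟨⟨0, hn⟩, Finset.mem_univ _⟩ z)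
    (k : ℕ) (hk : k = (Finset.univ.filter (fun i => z i = zmin)).card)
    (p : Fin n → ℝ) (hp : ∀ i, p i = if z i = zmin then 1 / (k : ℝ) else 0) :
    (droOPT n ρ z = zmin ↔ (n : ℝ) * ((n : ℝ) - k) / (2 * k) ≤ ρ) ∧
      ((n : ℝ) * ((n : ℝ) - k) / (2 * k) ≤ ρ →
        p ∈ chiSqBall n ρ ∧ (∑ i, p i * z i) = droOPT n ρ z ∧
          (1/2) * ∑ i, ((n : ℝ) * p i - 1)^2 = (n : ℝ) * ((n : ℝ) - k) / (2 * k)) := by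
  have hle : ∀ i, zmin ≤ z i := fun i => by
    rw [hzmin]; exact Finset.inf'_le _ (Finset.mem_univ i)
  have hkpos : 0 < k := by
    obtain ⟨j, -, hj⟩ := Finset.exists_mem_eq_inf' (s := Finset.univ)
      ⟨⟨0, hn⟩, Finset.mem_univ _⟩ z
    rw [hk]
    exact Finset.card_pos.2 ⟨j, by simp [hzmin, hj]⟩
  have hk0 : (k:ℝ) ≠ 0 := by positivity
  have hkR : (0:ℝ) < k := by positivity
  have hlow : ∀ q ∈ chiSqBall n ρ, zmin ≤ ∑ i, q i * z i := by
    rintro q ⟨h0, h1, -⟩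
    calc zmin = ∑ i, q i * zmin := by rw [← Finset.sum_mul, h1, one_mul]
      _ ≤ _ := Finset.sum_le_sum fun i _ => mul_le_mul_of_nonneg_left (hle i) (h0 i)
  have hne : (chiSqBall n ρ).Nonempty := ⟨_, aux_uniform n hn ρ hρ⟩
  have hbdd : BddBelow ((fun p : Fin n → ℝ => ∑ i, p i * z i) '' chiSqBall n ρ) :=
    ⟨zmin, by rintro _ ⟨q, hq, rfl⟩; exact hlow q hq⟩
  have hp1 : ∑ i, p i = 1 := by
    simp only [hp, ← Finset.sum_filter, Finset.sum_const, ← hk]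
    simp [hk0]
  have hp2 : ∑ i, (p i)^2 = 1 / k := by
    have : ∀ i, (p i)^2 = if z i = zmin then (1 / (k:ℝ))^2 else 0 := fun i => by
      rw [hp]; split_ifs <;> simp
    simp only [this, ← Finset.sum_filter, Finset.sum_const, ← hk]
    simp only [nsmul_eq_mul]
    field_simp
  have hpz : ∑ i, p i * z i = zmin := by
    have : ∀ i, p i * z i = p i * zmin := fun i => by
      rw [hp]; split_ifs with h <;> simp [h]
    simp only [this, ← Finset.sum_mul, hp1, one_mul]
  have hchi : (1/2) * ∑ i, ((n : ℝ) * p i - 1)^2 = (n : ℝ) * ((n : ℝ) - k) / (2 * k) := by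
    rw [aux_chi n p hp1, hp2]
    field_simp
  have hmem : (n : ℝ) * ((n : ℝ) - k) / (2 * k) ≤ ρ → p ∈ chiSqBall n ρ := fun h =>
    ⟨fun i => by rw [hp]; split_ifs <;> positivity, hp1, hchi.trans_le h⟩
  have hopt : (n : ℝ) * ((n : ℝ) - k) / (2 * k) ≤ ρ → droOPT n ρ z = zmin := fun h => by
    apply le_antisymm
    · exact csInf_le hbdd ⟨p, hmem h, hpz⟩
    · exact le_csInf (hne.image _) (by rintro _ ⟨q, hq, rfl⟩; exact hlow q hq)
  refine ⟨⟨fun h => ?_, hopt⟩, fun h => ⟨hmem h, by rw [hpz, hopt h], hchi⟩⟩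
  obtain ⟨q, hq, hqe⟩ := ((aux_compact n ρ).image
    (f := fun p : Fin n → ℝ => ∑ i, p i * z i) (by fun_prop)).sInf_mem (hne.image _)
  have hqz : ∑ i, q i * z i = zmin := hqe.trans h
  obtain ⟨h0, h1, h2⟩ := hq
  rw [aux_chi n q h1] at h2
  have hz : ∑ i, q i * (z i - zmin) = 0 := by
    simp only [mul_sub, Finset.sum_sub_distrib, ← Finset.sum_mul, h1, hqz]; ring
  rw [Finset.sum_eq_zero_iff_of_nonneg
    (fun i _ => mul_nonneg (h0 i) (sub_nonneg.2 (hle i)))] at hz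
  have hs : ∑ i ∈ Finset.univ.filter (fun i => z i = zmin), q i = 1 := by
    rw [← h1, Finset.sum_filter]
    refine Finset.sum_congr rfl fun i hi => ?_
    split_ifs with hzi
    · rfl
    · rcases mul_eq_zero.1 (hz i hi) with h | h
      · exact h.symm
      · exact absurd (sub_eq_zero.1 h) hzi
  have hcs := sq_sum_le_card_mul_sum_sq (s := Finset.univ.filter (fun i => z i = zmin)) (f := q)
  rw [hs, ← hk] at hcs
  have hsub : ∑ i ∈ Finset.univ.filter (fun i => z i = zmin), (q i)^2 ≤ ∑ i, (q i)^2 :=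
    Finset.sum_le_sum_of_subset_of_nonneg (Finset.filter_subset _ _) fun i _ _ => sq_nonneg _
  have h3 : 1 / (k:ℝ) ≤ ∑ i, (q i)^2 := by
    rw [div_le_iff₀ hkR]
    nlinarith
  calc (n : ℝ) * ((n : ℝ) - k) / (2 * k) = ((n:ℝ)^2 * (1 / k) - n) / 2 := by field_simp
    _ ≤ ((n:ℝ)^2 * ∑ i, (q i)^2 - n) / 2 := by gcongr
    _ ≤ ρ := h2
end

section
/- Let n ≥ 1 be an integer, let z ∈ ℝⁿ attain at least ℓ distinct values (ℓ ≥ 1), and suppose 0 ≤ ρ ≤ (ℓ − 1)/2. Then every minimizer p of p ↦ ∑_{i=1}^n p_i z_i over P_{ρ,n} has tight χ² constraint, i.e. satisfies (1/2)∑_{i=1}^n (n p_i − 1)² = ρ. -/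
theorem stmt11 (n : ℕ) (hn : 1 ≤ n) (ℓ : ℕ) (hℓ : 1 ≤ ℓ) (z : Fin n → ℝ)
    (hdist : ℓ ≤ (Finset.univ.image z).card)
    (ρ : ℝ) (hρ0 : 0 ≤ ρ) (hρ : ρ ≤ ((ℓ : ℝ) - 1) / 2) :
    ∀ p ∈ chiSqBall n ρ,
      (∀ q ∈ chiSqBall n ρ, ∑ i, p i * z i ≤ ∑ i, q i * z i) →
      (1/2) * ∑ i, ((n : ℝ) * p i - 1)^2 = ρ := by
  intro p hp hmin
  obtain ⟨hp0, hp1, hpc⟩ := hp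
  by_contra hne
  have hlt : (1/2) * ∑ i, ((n : ℝ) * p i - 1)^2 < ρ := lt_of_le_of_ne hpc hne
  haveI : Nonempty (Fin n) := ⟨⟨0, hn⟩⟩
  obtain ⟨k, hk⟩ := Finite.exists_min z
  -- move a bit of mass to a minimizing coordinate
  have hcont : Continuous (fun t : ℝ => (1/2) * ∑ i, ((n : ℝ) * ((1 - t) * p i
      + t * (if i = k then (1:ℝ) else 0)) - 1)^2) := by fun_prop
  have hev : ∀ᶠ t in nhds (0:ℝ), (1/2) * ∑ i, ((n : ℝ) * ((1 - t) * p i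
      + t * (if i = k then (1:ℝ) else 0)) - 1)^2 < ρ := by
    apply hcont.continuousAt.eventually_lt continuousAt_const
    simpa using hlt
  obtain ⟨ε, hε, hball⟩ := Metric.eventually_nhds_iff.mp hev
  obtain ⟨t, ht0, htε, ht1⟩ : ∃ t : ℝ, 0 < t ∧ t < ε ∧ t ≤ 1 := by
    refine ⟨min (ε/2) 1, by positivity, ?_, min_le_right _ _⟩
    exact lt_of_le_of_lt (min_le_left _ _) (by linarith)
  have hc := hball (y := t) (by rw [Real.dist_eq, sub_zero, abs_of_pos ht0]; exact htε)
  have hq := hmin (fun i => (1 - t) * p i + t * (if i = k then (1:ℝ) else 0)) (by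
    refine ⟨fun i => ?_, ?_, hc.le⟩
    · have := hp0 i
      have h1 : 0 ≤ 1 - t := by linarith
      dsimp only
      split_ifs <;> positivity
    · rw [Finset.sum_add_distrib, ← Finset.mul_sum, ← Finset.mul_sum, hp1]
      simp)
  have hobj : ∑ i, ((1 - t) * p i + t * (if i = k then (1:ℝ) else 0)) * z i
      = (1 - t) * ∑ i, p i * z i + t * z k := by
    simp only [add_mul, Finset.sum_add_distrib, mul_assoc, ← Finset.mul_sum]
    simp
  simp only [hobj] at hq
  have hle : ∑ i, p i * z i ≤ z k := by
    by_contra h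
    push Not at h
    nlinarith [mul_pos ht0 (sub_pos.mpr h)]
  have hsum0 : ∑ i, p i * (z i - z k) = 0 := by
    apply le_antisymm
    · simp only [mul_sub, Finset.sum_sub_distrib, ← Finset.sum_mul, hp1]
      linarith
    · exact Finset.sum_nonneg fun i _ => mul_nonneg (hp0 i) (sub_nonneg.mpr (hk i))
  have hzero := (Finset.sum_eq_zero_iff_of_nonneg
    (fun i _ => mul_nonneg (hp0 i) (sub_nonneg.mpr (hk i)))).mp hsum0
  set M := Finset.univ.filter (fun i => z i = z k) with hM
  have hsupp : ∀ i, i ∉ M → p i = 0 := by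
    intro i hi
    have := hzero i (Finset.mem_univ i)
    rcases mul_eq_zero.mp this with h | h
    · exact h
    · exact absurd (by simp [hM]; linarith) hi
  have hM1 : ∑ i ∈ M, p i = 1 := by
    rw [← hp1]
    exact Finset.sum_subset (Finset.subset_univ _) (fun i _ hi => hsupp i hi)
  have hCS : (1:ℝ) ≤ M.card * ∑ i, p i ^ 2 := by
    have h1 := sq_sum_le_card_mul_sum_sq (s := M) (f := p)
    have h2 : ∑ i ∈ M, p i ^ 2 ≤ ∑ i, p i ^ 2 :=
      Finset.sum_le_sum_of_subset_of_nonneg (Finset.subset_univ _) (fun i _ _ => sq_nonneg _)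
    rw [hM1] at h1
    nlinarith [mul_le_mul_of_nonneg_left h2 (Nat.cast_nonneg (α := ℝ) M.card)]
  have hcard : ℓ + M.card ≤ n + 1 := by
    have h1 : Finset.univ.image z ⊆ insert (z k) (Mᶜ.image z) := by
      intro x hx
      obtain ⟨i, _, rfl⟩ := Finset.mem_image.mp hx
      by_cases h : z i = z k
      · simp [h]
      · exact Finset.mem_insert_of_mem (Finset.mem_image_of_mem _ (by simp [hM, h]))
    have h2 := (Finset.card_le_card h1).trans (Finset.card_insert_le _ _)
    have h3 := Finset.card_image_le (s := Mᶜ) (f := z)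
    have h4 := Finset.card_add_card_compl M
    simp only [Fintype.card_fin] at h4
    omega
  have hMpos : 0 < M.card := Finset.card_pos.mpr ⟨k, by simp [hM]⟩
  have hexp : ∑ i, ((n : ℝ) * p i - 1)^2 = n^2 * ∑ i, p i ^ 2 - n := by
    have : ∀ i, ((n : ℝ) * p i - 1)^2 = n^2 * p i ^ 2 - 2 * n * p i + 1 := fun i => by ring
    simp only [this, Finset.sum_add_distrib, Finset.sum_sub_distrib, ← Finset.mul_sum, hp1]
    simp
    ring
  rw [hexp] at hlt
  have hcardR : (ℓ:ℝ) + M.card ≤ n + 1 := by exact_mod_cast hcard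
  have hMR : (0:ℝ) < M.card := by exact_mod_cast hMpos
  have hlR : (1:ℝ) ≤ ℓ := by exact_mod_cast hℓ
  generalize (M.card : ℝ) = m at *
  generalize ∑ i, p i ^ 2 = S at *
  have hA : (n:ℝ)^2 * S < n + ((ℓ:ℝ) - 1) := by linarith
  have hB : (n:ℝ)^2 * S < 2 * n - m := by linarith
  have h1 : m * ((n:ℝ)^2 * S) < m * (2 * n - m) := mul_lt_mul_of_pos_left hB hMR
  nlinarith [sq_nonneg ((n:ℝ) - m), mul_le_mul_of_nonneg_left hCS (sq_nonneg (n:ℝ))]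
end

section
/- Let n ≥ 1 be an integer, ρ ≥ 0, z ∈ ℝⁿ, and suppose every minimizer p of p ↦ ∑_{i=1}^n p_i z_i over P_{ρ,n} satisfies (1/2)∑_{i=1}^n (n p_i − 1)² = ρ. Let m* be the minimum of |{i : p_i > 0}| over all minimizers p. Then there is exactly one minimizer p whose support {i : p_i > 0} has cardinality m*; i.e., there is a unique optimal solution with minimum cardinality among all optimal solutions. -/
open Classical in
theorem stmt12 (n : ℕ) (hn : 1 ≤ n) (ρ : ℝ) (hρ : 0 ≤ ρ) (z : Fin n → ℝ)
    (htight : ∀ p ∈ chiSqBall n ρ,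
      (∀ q ∈ chiSqBall n ρ, ∑ i, p i * z i ≤ ∑ i, q i * z i) →
      (1/2) * ∑ i, ((n : ℝ) * p i - 1)^2 = ρ) :
    ∃! p : Fin n → ℝ,
      (p ∈ chiSqBall n ρ ∧ ∀ q ∈ chiSqBall n ρ, ∑ i, p i * z i ≤ ∑ i, q i * z i) ∧
      ∀ q : Fin n → ℝ,
        (q ∈ chiSqBall n ρ ∧ ∀ r ∈ chiSqBall n ρ, ∑ i, q i * z i ≤ ∑ i, r i * z i) →
        (Finset.univ.filter (fun i => 0 < p i)).card ≤
          (Finset.univ.filter (fun i => 0 < q i)).card := by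
  have hn0 : (0:ℝ) < n := by exact_mod_cast hn
  have hcont : Continuous (fun p : Fin n → ℝ => ∑ i, p i * z i) := by fun_prop
  have hclosed : IsClosed (chiSqBall n ρ) := by
    have h1 : IsClosed {p : Fin n → ℝ | ∀ i, 0 ≤ p i} := by
      simp only [Set.setOf_forall]
      exact isClosed_iInter fun i => isClosed_le (by fun_prop) (by fun_prop)
    have h2 : IsClosed {p : Fin n → ℝ | ∑ i, p i = 1} :=
      isClosed_eq (by fun_prop) (by fun_prop)
    have h3 : IsClosed {p : Fin n → ℝ | (1/2) * ∑ i, ((n : ℝ) * p i - 1)^2 ≤ ρ} :=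
      isClosed_le (by fun_prop) (by fun_prop)
    exact h1.inter (h2.inter h3)
  have hsub : chiSqBall n ρ ⊆ Set.Icc (fun _ => (0:ℝ)) (fun _ => 1) := by
    rintro p ⟨h0, h1, -⟩
    refine ⟨fun i => h0 i, fun i => ?_⟩
    show p i ≤ 1
    rw [← h1]
    exact Finset.single_le_sum (fun j _ => h0 j) (Finset.mem_univ i)
  have hcomp : IsCompact (chiSqBall n ρ) := isCompact_Icc.of_isClosed_subset hclosed hsub
  have hne : (chiSqBall n ρ).Nonempty := by
    refine ⟨fun _ => 1 / n, fun i => by positivity, ?_, ?_⟩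
    · simp [hn0.ne']
    · simp [hn0.ne', hρ]
  obtain ⟨p, hp, hmin⟩ := hcomp.exists_isMinOn hne hcont.continuousOn
  have hpm : ∀ q ∈ chiSqBall n ρ, ∑ i, p i * z i ≤ ∑ i, q i * z i := fun q hq => hmin hq
  have huniq : ∀ q : Fin n → ℝ, (q ∈ chiSqBall n ρ ∧
      ∀ r ∈ chiSqBall n ρ, ∑ i, q i * z i ≤ ∑ i, r i * z i) → q = p := by
    rintro q ⟨hq, hqm⟩
    have hpt := htight p hp hpm
    have hqt := htight q hq hqm
    -- the midpoint has smaller divergence by the parallelogram identity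
    have hid : (1/2) * ∑ i, ((n : ℝ) * ((p i + q i) / 2) - 1)^2
        = ρ - (n:ℝ)^2 / 8 * ∑ i, (q i - p i)^2 := by
      have : ρ = (1/2) * ((1/2) * ∑ i, ((n : ℝ) * p i - 1)^2)
          + (1/2) * ((1/2) * ∑ i, ((n : ℝ) * q i - 1)^2) := by rw [hpt, hqt]; ring
      rw [this]
      simp only [Finset.mul_sum]
      rw [← Finset.sum_add_distrib, ← Finset.sum_sub_distrib]
      exact Finset.sum_congr rfl fun i _ => by ring
    have hS : 0 ≤ ∑ i, (q i - p i)^2 := Finset.sum_nonneg fun i _ => sq_nonneg _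
    have hmem : (fun i => (p i + q i) / 2) ∈ chiSqBall n ρ := by
      refine ⟨fun i => ?_, ?_, ?_⟩
      · have := hp.1 i
        have := hq.1 i
        show 0 ≤ (p i + q i) / 2
        linarith
      · rw [← Finset.sum_div, Finset.sum_add_distrib, hp.2.1, hq.2.1]; norm_num
      · rw [hid]
        have : 0 ≤ (n:ℝ)^2 / 8 * ∑ i, (q i - p i)^2 := by positivity
        linarith
    have hval : ∑ i, (p i + q i) / 2 * z i
        = (1/2) * ∑ i, p i * z i + (1/2) * ∑ i, q i * z i := by
      simp only [Finset.mul_sum]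
      rw [← Finset.sum_add_distrib]
      exact Finset.sum_congr rfl fun i _ => by ring
    have ht := htight _ hmem (fun r hr => by
      rw [hval]
      linarith [hpm r hr, hqm r hr])
    rw [hid] at ht
    have hz : (n:ℝ)^2 / 8 * ∑ i, (q i - p i)^2 = 0 := by linarith
    have hz' : ∑ i, (q i - p i)^2 = 0 := by
      rcases mul_eq_zero.mp hz with h | h
      · exact absurd h (by positivity)
      · exact h
    rw [Finset.sum_eq_zero_iff_of_nonneg fun i _ => sq_nonneg _] at hz'
    funext i
    have := pow_eq_zero_iff (two_ne_zero) |>.mp (hz' i (Finset.mem_univ i))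
    linarith
  refine ⟨p, ⟨⟨hp, hpm⟩, fun q hq => by rw [huniq q hq]⟩, fun q hq => huniq q hq.1⟩
end

section
/- Let f be a monotone, submodular, normalized set function on a finite ground set V with f({i}) ≤ b for every i ∈ V, and let F be its multilinear extension. Then F is b-Lipschitz in the ℓ1 norm: |F(x) − F(x′)| ≤ b·∑_{i∈V} |x_i − x′_i| for all x, x′ ∈ [0,1]^V. -/
/-- The multilinear extension of a set function. -/
noncomputable def multilinearExt {V : Type*} [Fintype V] [DecidableEq V]
    (f : Finset V → ℝ) (x : V → ℝ) : ℝ :=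
  ∑ S : Finset V, f S * ((∏ i ∈ S, x i) * ∏ j ∈ Sᶜ, (1 - x j))

theorem multilinearExt_split {V : Type*} [Fintype V] [DecidableEq V]
    (f : Finset V → ℝ) (x : V → ℝ) (v : V) :
    multilinearExt f x = ∑ S ∈ (Finset.univ.erase v).powerset,
      (f S * (1 - x v) + f (insert v S) * x v) *
        ((∏ i ∈ S, x i) * ∏ j ∈ (Finset.univ.erase v) \ S, (1 - x j)) := by
  have hu : (Finset.univ : Finset (Finset V)) =
      (insert v ((Finset.univ : Finset V).erase v)).powerset := by
    rw [Finset.insert_erase (Finset.mem_univ v), Finset.powerset_univ]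
  unfold multilinearExt
  rw [hu, Finset.sum_powerset_insert (Finset.notMem_erase v _), ← Finset.sum_add_distrib]
  refine Finset.sum_congr rfl fun S hS => ?_
  have hv : v ∉ S := fun h => by
    have := Finset.mem_powerset.1 hS h
    simp at this
  have h1 : Sᶜ = insert v ((Finset.univ.erase v) \ S) := by
    ext j
    by_cases hj : j = v
    · subst hj; simp [hv]
    · simp [hj]
  have h2 : (insert v S)ᶜ = (Finset.univ.erase v) \ S := by
    ext j
    by_cases hj : j = v <;> simp [hj]
  rw [h2, h1, Finset.prod_insert (by simp), Finset.prod_insert hv]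
  ring

theorem multilinearExt_one {V : Type*} [Fintype V] [DecidableEq V]
    (f : Finset V → ℝ) (b : ℝ)
    (hnorm : f ∅ = 0)
    (hmono : ∀ S T : Finset V, S ⊆ T → f S ≤ f T)
    (hsub : ∀ S T : Finset V, ∀ v : V, S ⊆ T → v ∉ T →
      f (insert v T) - f T ≤ f (insert v S) - f S)
    (hb : ∀ i : V, f {i} ≤ b) (x x' : V → ℝ) (v : V)
    (hx : ∀ i, x i ∈ Set.Icc (0 : ℝ) 1) (h : ∀ i, i ≠ v → x' i = x i) :
    |multilinearExt f x - multilinearExt f x'| ≤ b * |x v - x' v| := by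
  set w : Finset V → ℝ := fun S =>
    (∏ i ∈ S, x i) * ∏ j ∈ (Finset.univ.erase v) \ S, (1 - x j) with hw
  have hw0 : ∀ S, 0 ≤ w S := fun S =>
    mul_nonneg (Finset.prod_nonneg fun i _ => (hx i).1)
      (Finset.prod_nonneg fun i _ => sub_nonneg.2 (hx i).2)
  have hw1 : ∑ S ∈ (Finset.univ.erase v).powerset, w S = 1 := by
    rw [hw, ← Finset.prod_add]
    simp
  have hvS : ∀ S ∈ (Finset.univ.erase v).powerset, v ∉ S := fun S hS h => by
    have := Finset.mem_powerset.1 hS h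
    simp at this
  have key : multilinearExt f x - multilinearExt f x' =
      (∑ S ∈ (Finset.univ.erase v).powerset, (f (insert v S) - f S) * w S) * (x v - x' v) := by
    rw [multilinearExt_split f x v, multilinearExt_split f x' v, ← Finset.sum_sub_distrib,
      Finset.sum_mul]
    refine Finset.sum_congr rfl fun S hS => ?_
    have e1 : ∏ i ∈ S, x' i = ∏ i ∈ S, x i :=
      Finset.prod_congr rfl fun i hi => h i fun e => hvS S hS (e ▸ hi)
    have e2 : ∏ j ∈ (Finset.univ.erase v) \ S, (1 - x' j) =
        ∏ j ∈ (Finset.univ.erase v) \ S, (1 - x j) :=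
      Finset.prod_congr rfl fun i hi => by
        rw [h i (by simp at hi; exact hi.1)]
    rw [e1, e2]
    simp only [hw]
    ring
  rw [key, abs_mul]
  refine mul_le_mul_of_nonneg_right ?_ (abs_nonneg _)
  rw [abs_of_nonneg (Finset.sum_nonneg fun S _ =>
    mul_nonneg (sub_nonneg.2 (hmono _ _ (Finset.subset_insert v S))) (hw0 S))]
  calc _ ≤ ∑ S ∈ (Finset.univ.erase v).powerset, b * w S := by
        refine Finset.sum_le_sum fun S hS => mul_le_mul_of_nonneg_right ?_ (hw0 S)
        have h1 := hsub ∅ S v (Finset.empty_subset S) (hvS S hS)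
        have h2 := hb v
        rw [hnorm, insert_empty_eq] at h1
        linarith
    _ = b := by rw [← Finset.mul_sum, hw1, mul_one]

theorem stmt15 {V : Type*} [Fintype V] [DecidableEq V]
    (f : Finset V → ℝ) (b : ℝ)
    (hnorm : f ∅ = 0)
    (hmono : ∀ S T : Finset V, S ⊆ T → f S ≤ f T)
    (hsub : ∀ S T : Finset V, ∀ v : V, S ⊆ T → v ∉ T →
      f (insert v T) - f T ≤ f (insert v S) - f S)
    (hb : ∀ i : V, f {i} ≤ b) :
    ∀ x x' : V → ℝ, (∀ i, x i ∈ Set.Icc (0 : ℝ) 1) → (∀ i, x' i ∈ Set.Icc (0 : ℝ) 1) →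
      |multilinearExt f x - multilinearExt f x'| ≤ b * ∑ i, |x i - x' i| := by
  intro x x' hx hx'
  have main : ∀ (s : Finset V) (x : V → ℝ), (∀ i, x i ∈ Set.Icc (0 : ℝ) 1) →
      (∀ i, i ∉ s → x' i = x i) →
      |multilinearExt f x - multilinearExt f x'| ≤ b * ∑ i ∈ s, |x i - x' i| := by
    intro s
    induction s using Finset.induction_on with
    | empty =>
      intro x _ h
      have : x' = x := funext fun i => h i (by simp)
      simp [this]
    | insert a s ha ih =>
      intro x hx h
      have h1 := multilinearExt_one f b hnorm hmono hsub hb x (Function.update x a (x' a)) a hx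
        (fun i hi => by simp [hi])
      have h2 := ih (Function.update x a (x' a))
        (fun i => by
          by_cases hi : i = a
          · subst hi; simpa using hx' i
          · simpa [hi] using hx i)
        (fun i hi => by
          by_cases hia : i = a
          · subst hia; simp
          · simpa [hia] using h i (by simp [hi, hia]))
      have h3 : ∑ i ∈ s, |Function.update x a (x' a) i - x' i| = ∑ i ∈ s, |x i - x' i| :=
        Finset.sum_congr rfl fun i hi => by
          have : i ≠ a := fun e => ha (e ▸ hi)
          simp [this]
      rw [h3] at h2
      rw [Function.update_self] at h1
      rw [Finset.sum_insert ha, mul_add]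
      exact (abs_sub_le _ _ _).trans (add_le_add h1 h2)
  exact main Finset.univ x hx (fun i hi => absurd (Finset.mem_univ i) hi)
end
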